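/- Let f be bistable: f ∈ C²([0,1]), f(0) = f(1) = 0, f'(0) < 0, f'(1) < 0, and f vanishes at exactly one interior point u* ∈ (0,1), where f'(u*) > 0. Then there exists a unique speed c* ∈ ℝ for which a traveling profile exists, i.e. a C² function U : ℝ → [0,1] solving U'' + c*·U' + f(U) = 0 with U(−∞) = 0 and U(+∞) = 1; moreover this profile is monotone increasing and is unique up to translation, and for no other speed c ≠ c* does such a profile exist. -/

import Mathlib

open Set Filter

/-- A traveling profile of speed `c` for `u_t = f(u) + u_xx`:
a C² function `U : ℝ → [0,1]` with `U'' + cU' + f(U) = 0`, `U(-∞) = 0`, `U(+∞) = 1`. -/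
def IsTravelingProfile (f : ℝ → ℝ) (c : ℝ) (U : ℝ → ℝ) : Prop :=
  ContDiff ℝ 2 U ∧ (∀ x, U x ∈ Icc (0:ℝ) 1) ∧
  (∀ x, deriv (deriv U) x + c * deriv U x + f (U x) = 0) ∧
  Tendsto U atBot (nhds 0) ∧ Tendsto U atTop (nhds 1)

/-!
In the phase plane `U' = V`, `V' = -c V - f(U)` a profile is an orbit from `(0, 0)` to `(1, 0)`.
Cut it at the interior zero `a` of `f`. An orbit shot from `(a, p)`, `p > 0`, with speed `c`
either overshoots `1`, turns back before `1`, or connects to `(1, 0)`. The first two alternatives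
are open conditions on `(c, p)` and, as long as the velocity is positive, the orbit is a curve
`V = P(U)` with `P' = -c - f / P`, so that decreasing `c` or increasing `p` favours overshooting.
The point reflection `(x, u) ↦ (-x, -u)` turns the other half-orbit into the same problem with
speed `-c`, so that for given `p` each half connects for exactly one speed. The conserved energy at
`c = 0` shows that both halves overshoot for large `p` and both turn back for small `p`; a
connectedness argument gives a `(c, p)` at which both connect, and the opposite monotonicities in
`c` make it unique. Conversely, every profile crosses `a` exactly once and with positive velocity,
hence arises from this `(c, p)`.
-/

open scoped Topology NNReal

/-! ### Global solutions of Lipschitz autonomous equations -/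

section GlobalFlow

open Real BoundedContinuousFunction

variable {E : Type*} [NormedAddCommGroup E] [NormedSpace ℝ E]

theorem norm_intervalIntegral_le_exp_abs {F : ℝ → E} {B l : ℝ} (hl : 0 < l) (hB : 0 ≤ B)
    (hF : ∀ s, ‖F s‖ ≤ B * exp (l * |s|)) (t : ℝ) :
    ‖∫ s in (0 : ℝ)..t, F s‖ ≤ B / l * exp (l * |t|) := by
  have integral_exp_le {t : ℝ} : (∫ s in (0 : ℝ)..t, B * exp (l * s)) ≤ B / l * exp (l * t) := by
    rw [intervalIntegral.integral_const_mul, intervalIntegral.integral_comp_mul_left _ hl.ne',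
      integral_exp, mul_zero, exp_zero, smul_eq_mul, ← mul_assoc, ← div_eq_mul_inv]
    gcongr
    linarith
  have forward {F : ℝ → E} (hF : ∀ s, ‖F s‖ ≤ B * exp (l * |s|)) {t : ℝ} (ht : 0 ≤ t) :
      ‖∫ s in (0 : ℝ)..t, F s‖ ≤ B / l * exp (l * t) := by
    refine (intervalIntegral.norm_integral_le_of_norm_le ht ?_
      (Continuous.intervalIntegrable (by fun_prop) _ _)).trans integral_exp_le
    exact .of_forall fun s hs ↦ by simpa only [abs_of_pos hs.1] using hF s
  rcases le_total 0 t with ht | ht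
  · simpa only [abs_of_nonneg ht] using forward hF ht
  · have reversed := forward (F := fun s ↦ F (-s)) (fun s ↦ by simpa using hF (-s))
      (neg_nonneg.2 ht)
    rw [intervalIntegral.integral_comp_neg, neg_neg, neg_zero, intervalIntegral.integral_symm,
      norm_neg] at reversed
    simpa only [abs_of_nonpos ht] using reversed

/-- The Picard operator `z ↦ x₀ + ∫₀ᵗ v(z)` written in terms of `w t = exp (-l |t|) • z t`: the
exponential weight makes it a contraction of the bounded continuous functions on the whole line. -/
noncomputable def weightedPicard (v : E → E) (x₀ : E) (l : ℝ) (w : ℝ → E) (t : ℝ) : E :=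
  exp (-(l * |t|)) • (x₀ + ∫ s in (0 : ℝ)..t, v (exp (l * |s|) • w s))

variable {v : E → E} {K : ℝ≥0} {l : ℝ}

theorem continuous_weightedPicard [CompleteSpace E] (hv : Continuous v) (x₀ : E) {w : ℝ → E}
    (hw : Continuous w) : Continuous (weightedPicard v x₀ l w) := by
  have continuous_primitive : Continuous fun t ↦ ∫ s in (0 : ℝ)..t, v (exp (l * |s|) • w s) :=
    intervalIntegral.continuous_primitive
      (fun _ _ ↦ Continuous.intervalIntegrable (by fun_prop) _ _) 0
  exact Continuous.smul (by fun_prop) (continuous_const.add continuous_primitive)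

theorem norm_weightedPicard_le (hv : LipschitzWith K v) (hl : 0 < l) (x₀ : E) (w : ℝ →ᵇ E)
    (t : ℝ) : ‖weightedPicard v x₀ l w t‖ ≤ ‖x₀‖ + (‖v 0‖ + K * ‖w‖) / l := by
  have speed_le (s : ℝ) : ‖v (exp (l * |s|) • w s)‖ ≤ (‖v 0‖ + K * ‖w‖) * exp (l * |s|) := by
    have one_le : 1 ≤ exp (l * |s|) := one_le_exp (by positivity)
    calc ‖v (exp (l * |s|) • w s)‖ ≤ ‖v 0‖ + ‖v (exp (l * |s|) • w s) - v 0‖ := by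
          simpa using norm_le_insert' (v (exp (l * |s|) • w s)) (v 0)
      _ ≤ ‖v 0‖ + K * (exp (l * |s|) * ‖w s‖) := by
          simpa [norm_smul, abs_of_pos (exp_pos _)] using hv.norm_sub_le (exp (l * |s|) • w s) 0
      _ ≤ ‖v 0‖ * exp (l * |s|) + K * (exp (l * |s|) * ‖w‖) := by
          gcongr
          · exact le_mul_of_one_le_right (norm_nonneg _) one_le
          · exact w.norm_coe_le_norm s
      _ = _ := by ring
  rw [weightedPicard, norm_smul, norm_of_nonneg (exp_pos _).le, exp_neg,
    inv_mul_le_iff₀ (exp_pos _)]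
  calc _ ≤ ‖x₀‖ + (‖v 0‖ + K * ‖w‖) / l * exp (l * |t|) :=
        (norm_add_le _ _).trans <| by
          gcongr; exact norm_intervalIntegral_le_exp_abs hl (by positivity) speed_le t
    _ ≤ ‖x₀‖ * exp (l * |t|) + (‖v 0‖ + K * ‖w‖) / l * exp (l * |t|) := by
        gcongr
        exact le_mul_of_one_le_right (norm_nonneg _) (one_le_exp (by positivity))
    _ = _ := by ring

theorem dist_weightedPicard_le (hv : LipschitzWith K v) (hl : 0 < l) (x₀ : E) (w₁ w₂ : ℝ →ᵇ E)
    (t : ℝ) : dist (weightedPicard v x₀ l w₁ t) (weightedPicard v x₀ l w₂ t) ≤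
      K / l * dist w₁ w₂ := by
  have integrable (w : ℝ →ᵇ E) : IntervalIntegrable (fun s ↦ v (exp (l * |s|) • w s))
      MeasureTheory.volume 0 t :=
    (hv.continuous.comp (by fun_prop)).intervalIntegrable _ _
  have speed_dist_le (s : ℝ) : ‖v (exp (l * |s|) • w₁ s) - v (exp (l * |s|) • w₂ s)‖ ≤
      K * dist w₁ w₂ * exp (l * |s|) := by
    calc _ ≤ K * ‖exp (l * |s|) • w₁ s - exp (l * |s|) • w₂ s‖ := hv.norm_sub_le _ _
      _ = K * (exp (l * |s|) * dist (w₁ s) (w₂ s)) := by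
          rw [← smul_sub, norm_smul, norm_of_nonneg (exp_pos _).le, dist_eq_norm]
      _ ≤ K * (exp (l * |s|) * dist w₁ w₂) := by gcongr; exact dist_coe_le_dist s
      _ = _ := by ring
  rw [dist_eq_norm, weightedPicard, weightedPicard, ← smul_sub, add_sub_add_left_eq_sub,
    ← intervalIntegral.integral_sub (integrable w₁) (integrable w₂), norm_smul,
    norm_of_nonneg (exp_pos _).le, exp_neg, inv_mul_le_iff₀ (exp_pos _)]
  calc _ ≤ K * dist w₁ w₂ / l * exp (l * |t|) :=
        norm_intervalIntegral_le_exp_abs hl (by positivity) speed_dist_le t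
    _ = _ := by ring

theorem exists_weightedPicard_eq_self [CompleteSpace E] (hv : LipschitzWith K v) (hl : K < l)
    (x₀ : E) : ∃ w : ℝ →ᵇ E, weightedPicard v x₀ l w = w := by
  have l_pos : 0 < l := K.2.trans_lt hl
  let Φ (w : ℝ →ᵇ E) : ℝ →ᵇ E := .ofNormedAddCommGroup (weightedPicard v x₀ l w)
    (continuous_weightedPicard hv.continuous x₀ w.continuous) _
    (norm_weightedPicard_le hv l_pos x₀ w)
  have contracting : ContractingWith (K / l.toNNReal) Φ := by
    refine ⟨?_, LipschitzWith.of_dist_le_mul fun w₁ w₂ ↦ ?_⟩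
    · rw [div_lt_one (by simpa using l_pos)]
      simpa [← NNReal.coe_lt_coe, l_pos.le] using hl
    · refine (dist_le (by positivity)).2 fun t ↦ ?_
      simpa [Φ, l_pos.le] using dist_weightedPicard_le hv l_pos x₀ w₁ w₂ t
  exact ⟨contracting.fixedPoint, congrArg (⇑) contracting.fixedPoint_isFixedPt⟩

theorem exists_forall_hasDerivAt_of_lipschitzWith [CompleteSpace E] (hv : LipschitzWith K v)
    (x₀ : E) : ∃ z : ℝ → E, z 0 = x₀ ∧ ∀ t, HasDerivAt z (v (z t)) t := by
  obtain ⟨w, hw⟩ := exists_weightedPicard_eq_self hv (lt_add_one (K : ℝ)) x₀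
  let z (t : ℝ) : E := exp ((K + 1) * |t|) • w t
  have z_continuous : Continuous z := by fun_prop
  have z_eq (t : ℝ) : z t = x₀ + ∫ s in (0 : ℝ)..t, v (z s) := by
    simp only [z, ← congrFun hw t, weightedPicard, smul_smul, ← exp_add, add_neg_cancel,
      exp_zero, one_smul]
  refine ⟨z, by simp [z_eq 0], fun t ↦ ?_⟩
  refine HasDerivAt.congr_of_eventuallyEq ?_ (.of_forall z_eq)
  exact ((hv.continuous.comp z_continuous).integral_hasStrictDerivAt 0 t).hasDerivAt.const_add x₀

end GlobalFlow

/-! ### Functions of a real variable -/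

section RealLemmas

theorem exists_first_zero {φ : ℝ → ℝ} (hφ : Continuous φ) {s t : ℝ} (hs : 0 < φ s) (hst : s ≤ t)
    (ht : φ t ≤ 0) : ∃ T ∈ Ioc s t, φ T = 0 ∧ ∀ x ∈ Ico s T, 0 < φ x := by
  obtain ⟨T, ⟨T_mem, hT⟩, T_le⟩ :=
    (isCompact_Icc.inter_right (isClosed_le hφ continuous_const)).exists_isLeast
      ⟨t, right_mem_Icc.2 hst, ht⟩
  have pos_before (x : ℝ) (hx : x ∈ Ico s T) : 0 < φ x := by
    by_contra hφx
    exact (T_le ⟨⟨hx.1, hx.2.le.trans T_mem.2⟩, not_lt.1 hφx⟩).not_gt hx.2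
  obtain ⟨y, hy, hφy⟩ := intermediate_value_Icc' T_mem.1 hφ.continuousOn ⟨hT, hs.le⟩
  obtain rfl : y = T := hy.2.eq_of_not_lt fun hyT ↦ (pos_before y ⟨hy.1, hyT⟩).ne' hφy
  exact ⟨y, ⟨hy.1.lt_of_ne fun h ↦ (h ▸ hs).ne' hφy, T_mem.2⟩, hφy, pos_before⟩

theorem exists_last_eq {φ : ℝ → ℝ} (hφ : Continuous φ) {m x₀ : ℝ} (hx₀ : φ x₀ ≤ m)
    (h : ∀ᶠ x in atTop, m < φ x) : ∃ X, φ X = m ∧ ∀ x > X, m < φ x := by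
  obtain ⟨N, hN⟩ := eventually_atTop.1 h
  have bdd : BddAbove {x | φ x ≤ m} := ⟨N, fun x hx ↦ (not_le.1 fun hNx ↦ (hN x hNx).not_ge hx).le⟩
  have greatest := (isClosed_le hφ continuous_const).isGreatest_csSup ⟨x₀, hx₀⟩ bdd
  set X := sSup {x | φ x ≤ m}
  have after_X (x : ℝ) (hx : x > X) : m < φ x := not_le.1 fun hφx ↦ (greatest.2 hφx).not_gt hx
  refine ⟨X, le_antisymm greatest.1 ?_, after_X⟩
  exact ge_of_tendsto (hφ.continuousWithinAt (s := Ioi X) (x := X))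
    (eventually_mem_nhdsWithin.mono fun x hx ↦ (after_X x hx).le)

theorem eventually_Icc_subset_nhdsGT {O : Set ℝ} (hO : IsOpen O) {s T : ℝ} (hsT : s ≤ T)
    (h : Icc s T ⊆ O) : ∀ᶠ x in 𝓝[>] T, Icc s x ⊆ O := by
  obtain ⟨u, hu, huO⟩ := mem_nhdsGE_iff_exists_Icc_subset.1
    (mem_nhdsWithin_of_mem_nhds (hO.mem_nhds (h (right_mem_Icc.2 hsT))))
  filter_upwards [Ioc_mem_nhdsGT hu] with x hx
  rw [← Icc_union_Icc_eq_Icc hsT hx.1.le]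
  exact union_subset h ((Icc_subset_Icc_right hx.2).trans huO)

theorem exists_tendsto_of_monotoneOn_Ici {φ : ℝ → ℝ} {s B : ℝ} (hφ : MonotoneOn φ (Ici s))
    (hB : ∀ x ≥ s, φ x ≤ B) : ∃ l, Tendsto φ atTop (𝓝 l) ∧ ∀ x ≥ s, φ x ≤ l := by
  have mono : Monotone fun x ↦ φ (max s x) := fun x y hxy ↦
    hφ (mem_Ici.2 (le_max_left _ _)) (mem_Ici.2 (le_max_left _ _)) (max_le_max_left s hxy)
  have bdd : BddAbove (range fun x ↦ φ (max s x)) :=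
    ⟨B, forall_mem_range.2 fun x ↦ hB _ (le_max_left _ _)⟩
  refine ⟨_, (tendsto_atTop_ciSup mono bdd).congr' ?_, fun x hx ↦ ?_⟩
  · filter_upwards [eventually_ge_atTop s] with x hx
    rw [max_eq_right hx]
  · simpa only [max_eq_right hx] using le_ciSup bdd x

theorem eventually_nhdsGT_neg_of_deriv_neg {φ : ℝ → ℝ} {s : ℝ} (hs : φ s = 0)
    (hs' : deriv φ s < 0) : ∀ᶠ x in 𝓝[>] s, φ x < 0 := by
  filter_upwards [nhdsWithin_le_nhds (eventually_nhdsWithin_sign_eq_of_deriv_neg hs' hs),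
    self_mem_nhdsWithin] with x sign_eq hsx
  rwa [← sign_eq_neg_one_iff, sign_eq, sign_eq_neg_one_iff, sub_neg]

variable {φ φ' : ℝ → ℝ}

theorem tendsto_atTop_of_eventually_le_deriv (hφ : ∀ x, HasDerivAt φ (φ' x) x) {δ : ℝ}
    (hδ : 0 < δ) (h : ∀ᶠ x in atTop, δ ≤ φ' x) : Tendsto φ atTop atTop := by
  obtain ⟨x₀, hx₀⟩ := eventually_atTop.1 h
  have linear_growth (x : ℝ) (hx : x₀ ≤ x) : φ x₀ + δ * (x - x₀) ≤ φ x := by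
    have := (convex_Ici x₀).mul_sub_le_image_sub_of_le_deriv
      (fun y _ ↦ (hφ y).continuousAt.continuousWithinAt)
      (fun y _ ↦ (hφ y).differentiableAt.differentiableWithinAt)
      (fun y hy ↦ (hφ y).deriv ▸ hx₀ y (interior_subset hy)) x₀ self_mem_Ici x hx hx
    linarith
  refine tendsto_atTop_mono' atTop ((eventually_ge_atTop x₀).mono linear_growth) ?_
  exact tendsto_atTop_add_const_left _ _
    ((tendsto_atTop_add_const_right _ _ tendsto_id).const_mul_atTop hδ)

theorem le_of_deriv_pos_of_eq {s t m : ℝ} (hcont : ContinuousOn φ (Icc s t))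
    (hφ : ∀ x ∈ Ico s t, HasDerivAt φ (φ' x) x) (hs : m ≤ φ s)
    (h : ∀ x ∈ Ico s t, φ x = m → 0 < φ' x) {x : ℝ} (hx : x ∈ Icc s t) : m ≤ φ x :=
  image_le_of_deriv_right_lt_deriv_boundary' continuousOn_const
    (fun _ _ ↦ hasDerivWithinAt_const _ _ _) hs hcont
    (fun x hx ↦ (hφ x hx).hasDerivWithinAt) (fun x hx hxm ↦ h x hx hxm.symm) hx

theorem exists_leftInvOn_hasDerivAt {I : Set ℝ} (hI : IsOpen I) (hI' : I.OrdConnected)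
    (hφ : ∀ x ∈ I, HasDerivAt φ (φ' x) x) (hcont : ContinuousOn φ' I) (hpos : ∀ x ∈ I, 0 < φ' x) :
    ∃ ψ : ℝ → ℝ, LeftInvOn ψ φ I ∧ ∀ x ∈ I, HasDerivAt ψ (φ' x)⁻¹ (φ x) := by
  have mono : StrictMonoOn φ I := strictMonoOn_of_deriv_pos hI'.convex
    (fun x hx ↦ (hφ x hx).continuousAt.continuousWithinAt)
    fun x hx ↦ (hφ x (interior_subset hx)).deriv ▸ hpos x (interior_subset hx)
  refine ⟨Function.invFunOn φ I, mono.injOn.leftInvOn_invFunOn, fun x hx ↦ ?_⟩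
  have strict : HasStrictDerivAt φ (φ' x) x := hasStrictDerivAt_of_hasDerivAt_of_continuousAt
    (eventually_of_mem (hI.mem_nhds hx) hφ) (hcont.continuousAt (hI.mem_nhds hx))
  exact (strict.to_local_left_inverse (hpos x hx).ne'
    (eventually_of_mem (hI.mem_nhds hx) mono.injOn.leftInvOn_invFunOn)).hasDerivAt

end RealLemmas

/-! ### The phase-plane system -/

/-- `(U, V)` solves `U' = V`, `V' = -c V - g(U)` on the whole line: this is the phase-plane form
of `U'' + c U' + g(U) = 0`. -/
structure IsPhaseSolution (g : ℝ → ℝ) (c : ℝ) (U V : ℝ → ℝ) : Prop where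
  hasDerivAt_fst (x : ℝ) : HasDerivAt U (V x) x
  hasDerivAt_snd (x : ℝ) : HasDerivAt V (-c * V x - g (U x)) x

/-- The vector field of the phase-plane system `U' = V`, `V' = -c V - g(U)`. -/
def phaseField (g : ℝ → ℝ) (c : ℝ) (z : ℝ × ℝ) : ℝ × ℝ :=
  (z.2, -c * z.2 - g z.1)

theorem lipschitzWith_phaseField {g : ℝ → ℝ} {K : ℝ≥0} (hg : LipschitzWith K g) (c : ℝ) :
    LipschitzWith (max 1 (‖c‖₊ + K)) (phaseField g c) := by
  have linear_part : LipschitzWith ‖c‖₊ fun z : ℝ × ℝ ↦ -c * z.2 := by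
    simpa only [nnnorm_neg, mul_one] using! (lipschitzWith_smul (-c)).comp LipschitzWith.prod_snd
  have reaction_part : LipschitzWith K fun z : ℝ × ℝ ↦ g z.1 := by
    simpa only [mul_one] using! hg.comp LipschitzWith.prod_fst
  exact LipschitzWith.prod_snd.prodMk (linear_part.sub reaction_part)

namespace IsPhaseSolution

variable {g : ℝ → ℝ} {K : ℝ≥0} {c : ℝ} {U V U' V' : ℝ → ℝ}

theorem continuous_fst (h : IsPhaseSolution g c U V) : Continuous U :=
  continuous_iff_continuousAt.2 fun x ↦ (h.hasDerivAt_fst x).continuousAt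

theorem continuous_snd (h : IsPhaseSolution g c U V) : Continuous V :=
  continuous_iff_continuousAt.2 fun x ↦ (h.hasDerivAt_snd x).continuousAt

theorem hasDerivAt_prodMk (h : IsPhaseSolution g c U V) (x : ℝ) :
    HasDerivAt (fun x ↦ (U x, V x)) (phaseField g c (U x, V x)) x :=
  (h.hasDerivAt_fst x).prodMk (h.hasDerivAt_snd x)

theorem comp_add_const (h : IsPhaseSolution g c U V) (s : ℝ) :
    IsPhaseSolution g c (fun x ↦ U (x + s)) (fun x ↦ V (x + s)) where
  hasDerivAt_fst x := (h.hasDerivAt_fst (x + s)).comp_add_const x s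
  hasDerivAt_snd x := (h.hasDerivAt_snd (x + s)).comp_add_const x s

theorem reflect (h : IsPhaseSolution g c U V) :
    IsPhaseSolution (fun u ↦ -g (-u)) (-c) (fun x ↦ -U (-x)) (fun x ↦ V (-x)) where
  hasDerivAt_fst x :=
    ((h.hasDerivAt_fst (-x)).scomp x (hasDerivAt_neg x)).neg.congr_deriv (by simp)
  hasDerivAt_snd x := by
    refine ((h.hasDerivAt_snd (-x)).scomp x (hasDerivAt_neg x)).congr_deriv ?_
    simp only [neg_neg, neg_smul, one_smul]
    ring

theorem const {a : ℝ} (ha : g a = 0) (c : ℝ) : IsPhaseSolution g c (fun _ ↦ a) (fun _ ↦ 0) where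
  hasDerivAt_fst x := hasDerivAt_const x a
  hasDerivAt_snd x := by simpa [ha] using hasDerivAt_const x (0 : ℝ)

theorem exists_of_lipschitzWith (hg : LipschitzWith K g) (c a p : ℝ) :
    ∃ U V, IsPhaseSolution g c U V ∧ U 0 = a ∧ V 0 = p := by
  obtain ⟨z, hz₀, hz⟩ :=
    exists_forall_hasDerivAt_of_lipschitzWith (lipschitzWith_phaseField hg c) (a, p)
  exact ⟨fun x ↦ (z x).1, fun x ↦ (z x).2, ⟨fun x ↦ (hz x).fst, fun x ↦ (hz x).snd⟩,
    congrArg Prod.fst hz₀, congrArg Prod.snd hz₀⟩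

theorem eq_of_eq_at (hg : LipschitzWith K g) (h : IsPhaseSolution g c U V)
    (h' : IsPhaseSolution g c U' V') {x₀ : ℝ} (hU : U x₀ = U' x₀) (hV : V x₀ = V' x₀) :
    U = U' ∧ V = V' := by
  have eq : (fun x ↦ (U x, V x)) = fun x ↦ (U' x, V' x) :=
    ODE_solution_unique_univ (s := fun _ ↦ univ)
      (fun _ ↦ (lipschitzWith_phaseField hg c).lipschitzOnWith)
      (fun x ↦ ⟨h.hasDerivAt_prodMk x, mem_univ _⟩) (fun x ↦ ⟨h'.hasDerivAt_prodMk x, mem_univ _⟩)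
      (Prod.ext hU hV)
  exact ⟨funext fun x ↦ congrArg Prod.fst (congrFun eq x),
    funext fun x ↦ congrArg Prod.snd (congrFun eq x)⟩

theorem dist_le_gronwallBound (hg : LipschitzWith K g) (h : IsPhaseSolution g c U V) {c' : ℝ}
    (h' : IsPhaseSolution g c' U' V') {R L T : ℝ} (hVR : ∀ x ∈ Icc 0 T, |V x| ≤ R)
    (hL : 1 ≤ L) (hcL : |c'| + K ≤ L) {x : ℝ} (hx : x ∈ Icc 0 T) :
    dist (U x, V x) (U' x, V' x) ≤
      gronwallBound (dist (U 0, V 0) (U' 0, V' 0)) L (|c' - c| * R) T := by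
  have L_nonneg : 0 ≤ L := zero_le_one.trans hL
  have R_nonneg : 0 ≤ R := (abs_nonneg _).trans (hVR x hx)
  have lipschitz : LipschitzWith L.toNNReal (phaseField g c') := by
    refine (lipschitzWith_phaseField hg c').weaken (NNReal.coe_le_coe.1 ?_)
    simpa [L_nonneg] using ⟨hL, hcL⟩
  have defect (y : ℝ) (hy : y ∈ Ico 0 T) :
      dist (phaseField g c (U y, V y)) (phaseField g c' (U y, V y)) ≤ |c' - c| * R := by
    have : -c * V y - g (U y) - (-c' * V y - g (U y)) = (c' - c) * V y := by ring
    rw [phaseField, phaseField, Prod.dist_eq, dist_self, max_eq_right dist_nonneg, Real.dist_eq,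
      this, abs_mul]
    gcongr
    exact hVR y (Ico_subset_Icc_self hy)
  have close := dist_le_of_approx_trajectories_ODE (v := fun _ ↦ phaseField g c')
    (fun _ ↦ lipschitz) (h.continuous_fst.prodMk h.continuous_snd).continuousOn
    (fun y _ ↦ (h.hasDerivAt_prodMk y).hasDerivWithinAt) defect
    (h'.continuous_fst.prodMk h'.continuous_snd).continuousOn
    (fun y _ ↦ (h'.hasDerivAt_prodMk y).hasDerivWithinAt) (fun y _ ↦ (dist_self _).le) le_rfl x hx
  rw [add_zero, sub_zero, Real.coe_toNNReal _ L_nonneg] at close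
  exact close.trans
    (gronwallBound_mono dist_nonneg (by positivity) L_nonneg hx.2)

theorem strictMonoOn_fst (h : IsPhaseSolution g c U V) {s T : ℝ} (hV : ∀ x ∈ Ico s T, 0 < V x) :
    StrictMonoOn U (Icc s T) :=
  strictMonoOn_of_deriv_pos (convex_Icc s T) h.continuous_fst.continuousOn fun x hx ↦ by
    rw [interior_Icc] at hx
    exact (h.hasDerivAt_fst x).deriv ▸ hV x (Ioo_subset_Ico_self hx)

theorem exists_phaseCurve (h : IsPhaseSolution g c U V) :
    ∃ P : ℝ → ℝ, ∀ T ≥ 0, (∀ x ∈ Icc 0 T, 0 < V x) →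
      P (U T) = V T ∧ HasDerivAt P (-c - g (U T) / V T) (U T) := by
  let I := connectedComponentIn {x | 0 < V x} 0
  have I_open : IsOpen I := (isOpen_lt continuous_const h.continuous_snd).connectedComponentIn
  have pos_on_I (x : ℝ) (hx : x ∈ I) : 0 < V x :=
    connectedComponentIn_subset {x | 0 < V x} 0 hx
  obtain ⟨Y, Y_leftInv, Y_deriv⟩ := exists_leftInvOn_hasDerivAt I_open
    isPreconnected_connectedComponentIn.ordConnected (fun x _ ↦ h.hasDerivAt_fst x)
    h.continuous_snd.continuousOn pos_on_I
  refine ⟨V ∘ Y, fun T hT hV ↦ ?_⟩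
  have T_mem : T ∈ I :=
    isPreconnected_Icc.subset_connectedComponentIn ⟨le_rfl, hT⟩ hV ⟨hT, le_rfl⟩
  have YUT : Y (U T) = T := Y_leftInv T_mem
  refine ⟨congrArg V YUT, ?_⟩
  refine ((h.hasDerivAt_snd T).comp_of_eq (U T) (Y_deriv T T_mem) YUT.symm).congr_deriv ?_
  have VT_ne := (pos_on_I T T_mem).ne'
  field_simp

end IsPhaseSolution

/-! ### Shooting -/

section Shooting

/-- The solution of the phase-plane system that starts from the point `(a, p)` at time `0`. -/
structure IsShot (g : ℝ → ℝ) (a c p : ℝ) (U V : ℝ → ℝ) : Prop extends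
    IsPhaseSolution g c U V where
  fst_zero : U 0 = a
  snd_zero : V 0 = p

/-- A monostable reaction: `g` is Lipschitz, vanishes at `a < b` and is positive in between. -/
structure IsMonostable (g : ℝ → ℝ) (a b : ℝ) : Prop where
  lt : a < b
  lipschitz : ∃ K, LipschitzWith K g
  map_left : g a = 0
  map_right : g b = 0
  pos : ∀ u ∈ Ioo a b, 0 < g u

/-- The orbit shot from `(a, p)` reaches the line `U = b` with positive velocity. -/
def Overshoots (g : ℝ → ℝ) (a b c p : ℝ) : Prop :=
  ∃ U V, IsShot g a c p U V ∧ ∃ T ≥ 0, U T = b ∧ ∀ x ∈ Icc 0 T, 0 < V x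

/-- The velocity of the orbit shot from `(a, p)` vanishes before `U` reaches `b`. -/
def TurnsBack (g : ℝ → ℝ) (a b c p : ℝ) : Prop :=
  ∃ U V, IsShot g a c p U V ∧ ∃ T > 0, U T < b ∧ V T = 0 ∧ ∀ x ∈ Ico 0 T, 0 < V x

/-- The orbit shot from `(a, p)` increases forever without reaching `b`. For a monostable
reaction it then converges to `(b, 0)`. -/
def Connects (g : ℝ → ℝ) (a b c p : ℝ) : Prop :=
  ∃ U V, IsShot g a c p U V ∧ ∀ x ≥ 0, U x < b ∧ 0 < V x

variable {g : ℝ → ℝ} {K : ℝ≥0} {a b c p c' p' : ℝ} {U V U' V' : ℝ → ℝ}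

namespace IsShot

theorem exists_of_lipschitzWith (hg : LipschitzWith K g) (a c p : ℝ) :
    ∃ U V, IsShot g a c p U V :=
  let ⟨U, V, h, hU, hV⟩ := IsPhaseSolution.exists_of_lipschitzWith hg c a p
  ⟨U, V, h, hU, hV⟩

theorem unique (hg : LipschitzWith K g) (h : IsShot g a c p U V) (h' : IsShot g a c p U' V') :
    U = U' ∧ V = V' :=
  h.eq_of_eq_at hg h'.toIsPhaseSolution (h.fst_zero.trans h'.fst_zero.symm)
    (h.snd_zero.trans h'.snd_zero.symm)

theorem eventually_dist_lt (hg : LipschitzWith K g) (h : IsShot g a c p U V) (T : ℝ) {ε : ℝ}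
    (hε : 0 < ε) : ∀ᶠ q : ℝ × ℝ in 𝓝 (c, p), ∀ U' V', IsShot g a q.1 q.2 U' V' →
      ∀ x ∈ Icc 0 T, dist (U x, V x) (U' x, V' x) < ε := by
  obtain ⟨R, hR⟩ := (isCompact_Icc (a := 0) (b := T)).exists_bound_of_continuousOn
    h.continuous_snd.continuousOn
  set L : ℝ := |c| + K + 1
  have one_le_L : 1 ≤ L := le_add_of_nonneg_left (by positivity)
  let β (q : ℝ × ℝ) : ℝ := gronwallBound (dist p q.2) L (|q.1 - c| * R) T
  have β_continuous : Continuous β := by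
    simp only [β, gronwallBound_of_K_ne_0 (zero_lt_one.trans_le one_le_L).ne']
    fun_prop
  have β_lt : ∀ᶠ q in 𝓝 (c, p), β q < ε := β_continuous.continuousAt.eventually_lt_const <| by
    simpa [β, gronwallBound_ε0_δ0] using hε
  have speed_lt : ∀ᶠ q : ℝ × ℝ in 𝓝 (c, p), |q.1| < |c| + 1 :=
    continuous_fst.abs.continuousAt.eventually_lt_const (by simp)
  filter_upwards [β_lt, speed_lt] with q hβ hspeed U' V' h' x hx
  refine lt_of_le_of_lt ?_ hβ
  simpa [β, h.fst_zero, h.snd_zero, h'.fst_zero, h'.snd_zero, Prod.dist_eq] using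
    h.dist_le_gronwallBound hg h'.toIsPhaseSolution hR one_le_L (by linarith) hx

theorem eventually_forall_mem (hg : LipschitzWith K g) (h : IsShot g a c p U V) {S : Set ℝ}
    (hS : IsCompact S) (hS₀ : S ⊆ Ici 0) {O : Set (ℝ × ℝ)} (hO : IsOpen O)
    (hmem : ∀ x ∈ S, (U x, V x) ∈ O) :
    ∀ᶠ q : ℝ × ℝ in 𝓝 (c, p), ∀ U' V', IsShot g a q.1 q.2 U' V' →
      ∀ x ∈ S, (U' x, V' x) ∈ O := by
  obtain ⟨T, hT⟩ := hS.bddAbove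
  obtain ⟨ε, hε, thickening_subset⟩ := (hS.image_of_continuousOn
    (h.continuous_fst.prodMk h.continuous_snd).continuousOn).exists_thickening_subset_open hO
      (image_subset_iff.2 hmem)
  filter_upwards [h.eventually_dist_lt hg T hε] with q hq U' V' h' x hx
  exact thickening_subset (Metric.mem_thickening_iff.2
    ⟨_, mem_image_of_mem _ hx, dist_comm (U' x, V' x) (U x, V x) ▸ hq U' V' h' x ⟨hS₀ hx, hT hx⟩⟩)

end IsShot

theorem Overshoots.not_turnsBack (hg : LipschitzWith K g) (h : Overshoots g a b c p) :
    ¬ TurnsBack g a b c p := by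
  rintro ⟨U', V', h', T', hT', hUT', hVT', hV'⟩
  obtain ⟨U, V, h, T, hT, hUT, hV⟩ := h
  obtain ⟨rfl, rfl⟩ := h.unique hg h'
  rcases le_or_gt T' T with hle | hlt
  · exact (hV T' ⟨hT'.le, hle⟩).ne' hVT'
  · have := h.strictMonoOn_fst hV' ⟨hT, hlt.le⟩ ⟨hT'.le, le_rfl⟩ hlt
    linarith

theorem Connects.not_overshoots (hg : LipschitzWith K g) (h : Connects g a b c p) :
    ¬ Overshoots g a b c p := by
  rintro ⟨U', V', h', T, hT, hUT, -⟩
  obtain ⟨U, V, h, hUV⟩ := h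
  obtain ⟨rfl, rfl⟩ := h.unique hg h'
  exact (hUV T hT).1.ne hUT

theorem Connects.not_turnsBack (hg : LipschitzWith K g) (h : Connects g a b c p) :
    ¬ TurnsBack g a b c p := by
  rintro ⟨U', V', h', T, hT, -, hVT, -⟩
  obtain ⟨U, V, h, hUV⟩ := h
  obtain ⟨rfl, rfl⟩ := h.unique hg h'
  exact (hUV T hT.le).2.ne' hVT

namespace IsMonostable

theorem exists_isShot (H : IsMonostable g a b) (c p : ℝ) : ∃ U V, IsShot g a c p U V :=
  let ⟨_, hg⟩ := H.lipschitz
  IsShot.exists_of_lipschitzWith hg a c p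

theorem overshoots_or_turnsBack_or_connects (H : IsMonostable g a b) (c : ℝ) (hp : 0 < p) :
    Overshoots g a b c p ∨ TurnsBack g a b c p ∨ Connects g a b c p := by
  obtain ⟨K, hg⟩ := H.lipschitz
  obtain ⟨U, V, h⟩ := H.exists_isShot c p
  by_cases stays : ∀ x ≥ 0, U x < b ∧ 0 < V x
  · exact .inr (.inr ⟨U, V, h, stays⟩)
  push Not at stays
  obtain ⟨t, ht₀, ht⟩ := stays
  obtain ⟨T, hT, hmin, before_T⟩ := exists_first_zero (φ := fun x ↦ min (b - U x) (V x))
    ((continuous_const.sub h.continuous_fst).min h.continuous_snd) (s := 0) (t := t)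
    (lt_min (sub_pos.2 (h.fst_zero.trans_lt H.lt)) (hp.trans_eq h.snd_zero.symm)) ht₀
    (min_le_iff.2 (or_iff_not_imp_left.2 fun hUt ↦ ht (sub_pos.1 (not_le.1 hUt))))
  have V_pos (x : ℝ) (hx : x ∈ Ico 0 T) : 0 < V x := (lt_min_iff.1 (before_T x hx)).2
  have UT_le : U T ≤ b := sub_nonneg.1 (hmin.symm.trans_le (min_le_left _ _))
  have VT_nonneg : 0 ≤ V T := hmin.symm.trans_le (min_le_right _ _)
  rcases VT_nonneg.eq_or_lt with VT_zero | VT_pos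
  · rcases UT_le.eq_or_lt with UT_eq | UT_lt
    · have V_zero := (h.eq_of_eq_at hg (.const H.map_right c) UT_eq VT_zero.symm).2
      exact absurd (h.snd_zero.symm.trans (congrFun V_zero 0)) hp.ne'
    · exact .inr (.inl ⟨U, V, h, T, hT.1, UT_lt, VT_zero.symm, V_pos⟩)
  · refine .inl ⟨U, V, h, T, hT.1.le, ?_, fun x hx ↦ ?_⟩
    · exact UT_le.eq_of_not_lt fun UT_lt ↦ (lt_min (sub_pos.2 UT_lt) VT_pos).ne' hmin
    · exact hx.2.eq_or_lt.elim (fun hxT ↦ hxT ▸ VT_pos) fun hxT ↦ V_pos x ⟨hx.1, hxT⟩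

theorem isOpen_overshoots (H : IsMonostable g a b) :
    IsOpen {q : ℝ × ℝ | Overshoots g a b q.1 q.2} := by
  obtain ⟨K, hg⟩ := H.lipschitz
  refine isOpen_iff_eventually.2 ?_
  rintro ⟨c, p⟩ ⟨U, V, h, T, hT, hUT, hV⟩
  obtain ⟨x, hTx, hVx⟩ : ∃ x > T, ∀ y ∈ Icc 0 x, 0 < V y :=
    (eventually_mem_nhdsWithin.and (eventually_Icc_subset_nhdsGT
      (isOpen_lt continuous_const h.continuous_snd) hT hV)).exists
  have Ux_gt : b < U x := hUT ▸ h.strictMonoOn_fst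
    (fun y hy ↦ hVx y (Ico_subset_Icc_self hy)) ⟨hT, hTx.le⟩ ⟨hT.trans hTx.le, le_rfl⟩ hTx
  filter_upwards [h.eventually_forall_mem hg isCompact_Icc Icc_subset_Ici_self
      (isOpen_lt continuous_const continuous_snd) hVx,
    h.eventually_forall_mem hg isCompact_singleton (singleton_subset_iff.2 (hT.trans hTx.le))
      (isOpen_lt continuous_const continuous_fst) (by simpa using Ux_gt)] with q hpos hgt
  obtain ⟨U', V', h'⟩ := H.exists_isShot q.1 q.2
  obtain ⟨T', hT', hUT'⟩ := intermediate_value_Icc (hT.trans hTx.le)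
    h'.continuous_fst.continuousOn ⟨h'.fst_zero ▸ H.lt.le, (hgt U' V' h' x rfl).le⟩
  exact ⟨U', V', h', T', hT'.1, hUT', fun y hy ↦ hpos U' V' h' y ⟨hy.1, hy.2.trans hT'.2⟩⟩

theorem isOpen_turnsBack (H : IsMonostable g a b) :
    IsOpen {q : ℝ × ℝ | TurnsBack g a b q.1 q.2} := by
  obtain ⟨K, hg⟩ := H.lipschitz
  refine isOpen_iff_eventually.2 ?_
  rintro ⟨c, p⟩ ⟨U, V, h, T, hT, hUT, hVT, hV⟩
  have U_strictMonoOn := h.strictMonoOn_fst hV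
  have UT_mem : U T ∈ Ioo a b :=
    ⟨h.fst_zero ▸ U_strictMonoOn ⟨le_rfl, hT.le⟩ ⟨hT.le, le_rfl⟩ hT, hUT⟩
  have V_deriv_neg : deriv V T < 0 := by
    simpa [(h.hasDerivAt_snd T).deriv, hVT] using H.pos _ UT_mem
  have V_neg : ∀ᶠ x in 𝓝[>] T, V x < 0 := eventually_nhdsGT_neg_of_deriv_neg hVT V_deriv_neg
  obtain ⟨x, hTx, hUx, hVx⟩ : ∃ x > T, (∀ y ∈ Icc 0 x, U y < b) ∧ V x < 0 :=
    (eventually_mem_nhdsWithin.and ((eventually_Icc_subset_nhdsGT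
      (isOpen_lt h.continuous_fst continuous_const) hT.le fun y hy ↦
        (U_strictMonoOn.monotoneOn hy ⟨hT.le, le_rfl⟩ hy.2).trans_lt hUT).and V_neg)).exists
  have x_nonneg : 0 ≤ x := hT.le.trans hTx.le
  have p_pos : 0 < p := (hV 0 ⟨le_rfl, hT⟩).trans_eq h.snd_zero
  filter_upwards [h.eventually_forall_mem hg isCompact_Icc Icc_subset_Ici_self
      (isOpen_lt continuous_fst continuous_const) hUx,
    h.eventually_forall_mem hg isCompact_singleton (singleton_subset_iff.2 x_nonneg)
      (isOpen_lt continuous_snd continuous_const) (by simpa using hVx),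
    continuous_snd.continuousAt.eventually_const_lt p_pos] with q hlt hneg hq
  obtain ⟨U', V', h'⟩ := H.exists_isShot q.1 q.2
  obtain ⟨T', hT', hVT', V'_pos⟩ := exists_first_zero h'.continuous_snd
    (hq.trans_eq h'.snd_zero.symm) x_nonneg (hneg U' V' h' x rfl).le
  exact ⟨U', V', h', T', hT'.1, hlt U' V' h' T' ⟨hT'.1.le, hT'.2⟩, hVT', V'_pos⟩

end IsMonostable

/-! ### Comparison of phase curves -/

/-- On `s` the positive function `P` solves `P' = -c - g / P`: its graph is then an orbit of the
phase-plane system, parametrised by `U` instead of time. -/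
def IsPhaseCurveOn (g : ℝ → ℝ) (c : ℝ) (P : ℝ → ℝ) (s : Set ℝ) : Prop :=
  ∀ u ∈ s, 0 < P u ∧ HasDerivAt P (-c - g u / P u) u

namespace IsPhaseCurveOn

variable {P Q : ℝ → ℝ} {s : Set ℝ} {m : ℝ}

theorem hasDerivAt_sub (hP : IsPhaseCurveOn g c P s) (hQ : IsPhaseCurveOn g c' Q s) {u : ℝ}
    (hu : u ∈ s) :
    HasDerivAt (fun u ↦ Q u - P u) ((c - c') + g u * (Q u - P u) / (P u * Q u)) u := by
  have P_ne := (hP u hu).1.ne'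
  have Q_ne := (hQ u hu).1.ne'
  refine ((hQ u hu).2.sub (hP u hu).2).congr_deriv ?_
  field_simp
  ring

theorem strictMonoOn_sub (hP : IsPhaseCurveOn g c P (Icc a m))
    (hQ : IsPhaseCurveOn g c' Q (Icc a m)) (hga : 0 ≤ g a) (hg : ∀ u ∈ Ioo a m, 0 < g u)
    (hc : c' ≤ c) (ha : P a ≤ Q a) (hne : c' < c ∨ P a < Q a) :
    StrictMonoOn (fun u ↦ Q u - P u) (Icc a m) := by
  let D (u : ℝ) := Q u - P u
  have hD (u : ℝ) (hu : u ∈ Icc a m) := hP.hasDerivAt_sub hQ hu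
  have continuousOn_D : ContinuousOn D (Icc a m) :=
    fun u hu ↦ (hD u hu).continuousAt.continuousWithinAt
  have Da_nonneg : 0 ≤ D a := sub_nonneg.2 ha
  have g_nonneg (u : ℝ) (hu : u ∈ Ico a m) : 0 ≤ g u :=
    hu.1.eq_or_lt.elim (fun h ↦ h ▸ hga) fun h ↦ (hg u ⟨h, hu.2⟩).le
  have deriv_pos (u : ℝ) (hu : u ∈ Ico a m) (hDu : D a / 2 ≤ D u) (hau : 0 < D a → a < u) :
      0 < (c - c') + g u * D u / (P u * Q u) := by
    have PQ_pos : 0 < P u * Q u :=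
      mul_pos (hP u (Ico_subset_Icc_self hu)).1 (hQ u (Ico_subset_Icc_self hu)).1
    have D_nonneg : 0 ≤ D u := (div_nonneg Da_nonneg zero_le_two).trans hDu
    rcases hne with c_lt | Pa_lt
    · exact add_pos_of_pos_of_nonneg (sub_pos.2 c_lt)
        (div_nonneg (mul_nonneg (g_nonneg u hu) D_nonneg) PQ_pos.le)
    · have Da_pos : 0 < D a := sub_pos.2 Pa_lt
      have g_pos : 0 < g u := hg u ⟨hau Da_pos, hu.2⟩
      exact add_pos_of_nonneg_of_pos (sub_nonneg.2 hc)
        (div_pos (mul_pos g_pos ((half_pos Da_pos).trans_le hDu)) PQ_pos)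
  have D_ge (u : ℝ) (hu : u ∈ Icc a m) : D a / 2 ≤ D u := by
    refine le_of_deriv_pos_of_eq continuousOn_D (fun u hu ↦ hD u (Ico_subset_Icc_self hu))
      (half_le_self Da_nonneg) (fun u hu hDu ↦ deriv_pos u hu hDu.ge fun Da_pos ↦ ?_) hu
    exact hu.1.lt_of_ne fun hau ↦ (half_lt_self Da_pos).ne (hau ▸ hDu.symm)
  refine strictMonoOn_of_deriv_pos (convex_Icc a m) continuousOn_D fun u hu ↦ ?_
  rw [interior_Icc] at hu
  rw [(hD u (Ioo_subset_Icc_self hu)).deriv]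
  exact deriv_pos u (Ioo_subset_Ico_self hu) (D_ge u (Ioo_subset_Icc_self hu)) fun _ ↦ hu.1

end IsPhaseCurveOn

theorem IsShot.exists_isPhaseCurveOn (h : IsShot g a c p U V) : ∃ P : ℝ → ℝ, ∀ T ≥ 0,
    (∀ x ∈ Icc 0 T, 0 < V x) → P (U T) = V T ∧ IsPhaseCurveOn g c P (Icc a (U T)) := by
  obtain ⟨P, hP⟩ := h.toIsPhaseSolution.exists_phaseCurve
  refine ⟨P, fun T hT hV ↦ ⟨(hP T hT hV).1, fun u hu ↦ ?_⟩⟩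
  obtain ⟨x, hx, rfl⟩ :=
    intermediate_value_Icc hT h.continuous_fst.continuousOn (h.fst_zero.symm ▸ hu)
  have V_pos (y : ℝ) (hy : y ∈ Icc 0 x) : 0 < V y := hV y ⟨hy.1, hy.2.trans hx.2⟩
  rw [(hP x hx.1 V_pos).1]
  exact ⟨hV x hx, (hP x hx.1 V_pos).2⟩

namespace IsMonostable

theorem tendsto_fst (H : IsMonostable g a b) (h : IsShot g a c p U V)
    (hUV : ∀ x ≥ 0, U x < b ∧ 0 < V x) : Tendsto U atTop (𝓝 b) := by
  have mono : StrictMonoOn U (Ici 0) := strictMonoOn_of_deriv_pos (convex_Ici 0)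
    h.continuous_fst.continuousOn fun x hx ↦
      (h.hasDerivAt_fst x).deriv ▸ (hUV x (interior_subset hx)).2
  obtain ⟨l, U_tendsto, U_le⟩ :=
    exists_tendsto_of_monotoneOn_Ici mono.monotoneOn fun x hx ↦ (hUV x hx).1.le
  have l_le : l ≤ b := le_of_tendsto U_tendsto
    ((eventually_ge_atTop 0).mono fun x hx ↦ (hUV x hx).1.le)
  have a_lt : a < l := calc
    a = U 0 := h.fst_zero.symm
    _ < U 1 := mono self_mem_Ici (mem_Ici.2 zero_le_one) zero_lt_one
    _ ≤ l := U_le 1 zero_le_one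
  suffices ¬ l < b from l_le.eq_of_not_lt this ▸ U_tendsto
  intro l_lt
  obtain ⟨K, hg⟩ := H.lipschitz
  have gl_pos : 0 < g l := H.pos l ⟨a_lt, l_lt⟩
  have gU_ge : ∀ᶠ x in atTop, g l / 2 ≤ g (U x) :=
    ((hg.continuous.tendsto l).comp U_tendsto).eventually_const_le (half_lt_self gl_pos)
  have momentum_tendsto : Tendsto (fun x ↦ -(V x + c * U x)) atTop atTop := by
    refine tendsto_atTop_of_eventually_le_deriv (fun x ↦ ?_) (half_pos gl_pos) gU_ge
    exact ((h.hasDerivAt_snd x).add ((h.hasDerivAt_fst x).const_mul c)).neg.congr_deriv (by ring)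
  refine not_tendsto_atTop_of_tendsto_nhds (U_tendsto.const_mul (-c))
    (tendsto_atTop_mono' atTop ?_ momentum_tendsto)
  filter_upwards [eventually_ge_atTop 0] with x hx
  linarith [(hUV x hx).2]

theorem exists_fst_eq_of_not_turnsBack (H : IsMonostable g a b) (hp : 0 < p)
    (h : IsShot g a c p U V) (hnot : ¬ TurnsBack g a b c p) {m : ℝ} (hm : m ∈ Ico a b) :
    ∃ T ≥ 0, U T = m ∧ ∀ x ∈ Icc 0 T, 0 < V x := by
  obtain ⟨K, hg⟩ := H.lipschitz
  obtain ⟨X, hX, m_le, V_pos⟩ : ∃ X ≥ 0, m ≤ U X ∧ ∀ x ∈ Icc 0 X, 0 < V x := by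
    rcases H.overshoots_or_turnsBack_or_connects c hp with ⟨_, _, h', T, hT, hUT, hV⟩ | ht |
      ⟨_, _, h', hUV⟩
    · obtain ⟨rfl, rfl⟩ := h'.unique hg h
      exact ⟨T, hT, hUT.symm ▸ hm.2.le, hV⟩
    · exact absurd ht hnot
    · obtain ⟨rfl, rfl⟩ := h'.unique hg h
      obtain ⟨X, hX, hmX⟩ := ((eventually_ge_atTop 0).and
        ((H.tendsto_fst h hUV).eventually_const_le hm.2)).exists
      exact ⟨X, hX, hmX, fun x hx ↦ (hUV x hx.1).2⟩
  obtain ⟨T, hT, hUT⟩ := intermediate_value_Icc hX h.continuous_fst.continuousOn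
    ⟨h.fst_zero.trans_le hm.1, m_le⟩
  exact ⟨T, hT.1, hUT, fun x hx ↦ V_pos x ⟨hx.1, hx.2.trans hT.2⟩⟩

theorem overshoots_of_forall_le_snd (H : IsMonostable g a b) (hp : 0 < p)
    (h : IsShot g a c p U V) {δ : ℝ} (hδ : 0 < δ)
    (hV : ∀ x ≥ 0, (∀ y ∈ Icc 0 x, U y < b ∧ 0 < V y) → δ ≤ V x) : Overshoots g a b c p := by
  obtain ⟨K, hg⟩ := H.lipschitz
  rcases H.overshoots_or_turnsBack_or_connects c hp with ho | ⟨_, _, h', T, hT, hUT, hVT, hVpos⟩ |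
    ⟨_, _, h', hUV⟩
  · exact ho
  · obtain ⟨rfl, rfl⟩ := h'.unique hg h
    have V_ge (x : ℝ) (hx : x ∈ Ico 0 T) : δ ≤ _ := hV x hx.1 fun y hy ↦
      have hy' : y ∈ Ico 0 T := ⟨hy.1, hy.2.trans_lt hx.2⟩
      ⟨((h.strictMonoOn_fst hVpos).monotoneOn (Ico_subset_Icc_self hy') ⟨hT.le, le_rfl⟩
        hy'.2.le).trans_lt hUT, hVpos y hy'⟩
    have T_mem_closure : T ∈ closure (Ico 0 T) := closure_Ico hT.ne ▸ ⟨hT.le, le_rfl⟩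
    have VT_ge := closure_minimal V_ge (isClosed_le continuous_const h.continuous_snd) T_mem_closure
    exact absurd (hVT ▸ VT_ge) hδ.not_ge
  · obtain ⟨rfl, rfl⟩ := h'.unique hg h
    have V_ge := (eventually_ge_atTop 0).mono fun x hx ↦ hV x hx fun y hy ↦ hUV y hy.1
    exact absurd (tendsto_atTop_of_eventually_le_deriv h.hasDerivAt_fst hδ V_ge)
      (not_tendsto_atTop_of_tendsto_nhds (H.tendsto_fst h hUV))

theorem exists_velocity_gap (H : IsMonostable g a b) (hp : 0 < p)
    (hnot : ¬ TurnsBack g a b c p) (h' : IsShot g a c' p' U' V') (hc : c' ≤ c) (hpp' : p ≤ p')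
    (hne : c' < c ∨ p < p') :
    ∃ D : ℝ → ℝ, 0 ≤ D a ∧ ∀ x ≥ 0, (∀ y ∈ Icc 0 x, U' y < b ∧ 0 < V' y) →
      D (U' x) < V' x ∧ StrictMonoOn D (Icc a (U' x)) := by
  obtain ⟨U, V, h⟩ := H.exists_isShot c p
  obtain ⟨P, hP⟩ := h.exists_isPhaseCurveOn
  obtain ⟨Q, hQ⟩ := h'.exists_isPhaseCurveOn
  have Pa : P a = p := by
    simpa only [h.fst_zero, h.snd_zero] using (hP 0 le_rfl (by simpa [h.snd_zero] using hp)).1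
  have Qa : Q a = p' := by
    simpa only [h'.fst_zero, h'.snd_zero] using
      (hQ 0 le_rfl (by simpa [h'.snd_zero] using hp.trans_le hpp')).1
  refine ⟨fun u ↦ Q u - P u, by simpa [Pa, Qa] using hpp', fun x hx before_x ↦ ?_⟩
  have a_le : a ≤ U' x := h'.fst_zero ▸ (h'.strictMonoOn_fst fun y hy ↦
    (before_x y (Ico_subset_Icc_self hy)).2).monotoneOn ⟨le_rfl, hx⟩ ⟨hx, le_rfl⟩ hx
  have Ux_lt : U' x < b := (before_x x ⟨hx, le_rfl⟩).1
  obtain ⟨T, hT, hUT, V_pos⟩ := H.exists_fst_eq_of_not_turnsBack hp h hnot ⟨a_le, Ux_lt⟩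
  obtain ⟨PUT, P_curve⟩ := hP T hT V_pos
  obtain ⟨QUx, Q_curve⟩ := hQ x hx fun y hy ↦ (before_x y hy).2
  rw [hUT] at PUT P_curve
  refine ⟨?_, P_curve.strictMonoOn_sub Q_curve H.map_left.ge
    (fun u hu ↦ H.pos u ⟨hu.1, hu.2.trans Ux_lt⟩) hc (by rwa [Pa, Qa]) (by rwa [Pa, Qa])⟩
  simp only [QUx, PUT]
  exact sub_lt_self _ (V_pos T ⟨hT, le_rfl⟩)

theorem overshoots_of_le (H : IsMonostable g a b) (hp : 0 < p) (hnot : ¬ TurnsBack g a b c p)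
    (hc : c' ≤ c) (hpp' : p ≤ p') (hne : c' < c ∨ p < p') : Overshoots g a b c' p' := by
  obtain ⟨U, V, h⟩ := H.exists_isShot c' p'
  have p'_pos : 0 < p' := hp.trans_le hpp'
  obtain ⟨D, Da_nonneg, hD⟩ := H.exists_velocity_gap hp hnot h hc hpp' hne
  obtain ⟨x₀, x₀_pos, before_x₀⟩ : ∃ x₀ > 0, ∀ y ∈ Icc 0 x₀, U y < b ∧ 0 < V y :=
    (eventually_mem_nhdsWithin.and (eventually_Icc_subset_nhdsGT
      ((isOpen_lt h.continuous_fst continuous_const).inter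
        (isOpen_lt continuous_const h.continuous_snd)) le_rfl
      (by simpa [h.fst_zero, h.snd_zero] using ⟨H.lt, p'_pos⟩))).exists
  have mono {x : ℝ} (before_x : ∀ y ∈ Icc 0 x, U y < b ∧ 0 < V y) : StrictMonoOn U (Icc 0 x) :=
    h.strictMonoOn_fst fun y hy ↦ (before_x y (Ico_subset_Icc_self hy)).2
  have a_lt : a < U x₀ :=
    h.fst_zero ▸ mono before_x₀ ⟨le_rfl, x₀_pos.le⟩ ⟨x₀_pos.le, le_rfl⟩ x₀_pos
  have gap_pos : 0 < D (U x₀) := Da_nonneg.trans_lt <|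
    (hD x₀ x₀_pos.le before_x₀).2 ⟨le_rfl, a_lt.le⟩ ⟨a_lt.le, le_rfl⟩ a_lt
  obtain ⟨δ, δ_pos, V_ge⟩ := isCompact_Icc.exists_forall_le' h.continuous_snd.continuousOn
    fun y hy ↦ (before_x₀ y hy).2
  refine H.overshoots_of_forall_le_snd p'_pos h (lt_min δ_pos gap_pos) fun x hx before_x ↦ ?_
  rcases le_total x x₀ with hxx₀ | hx₀x
  · exact (min_le_left _ _).trans (V_ge x ⟨hx, hxx₀⟩)
  · obtain ⟨D_lt, D_mono⟩ := hD x hx before_x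
    have U_le : U x₀ ≤ U x := (mono before_x).monotoneOn ⟨x₀_pos.le, hx₀x⟩ ⟨hx, le_rfl⟩ hx₀x
    calc min δ (D (U x₀)) ≤ D (U x₀) := min_le_right _ _
      _ ≤ D (U x) := D_mono.monotoneOn ⟨a_lt.le, U_le⟩ ⟨a_lt.le.trans U_le, le_rfl⟩ U_le
      _ ≤ V x := D_lt.le

end IsMonostable

/-! ### Existence of connecting speeds -/

theorem IsShot.energy_eq (hg : Continuous g) (h : IsShot g a 0 p U V) (x : ℝ) :
    V x ^ 2 + 2 * ∫ u in a..U x, g u = p ^ 2 := by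
  have hasDerivAt_energy (y : ℝ) :
      HasDerivAt (fun y ↦ V y ^ 2 + 2 * ∫ u in a..U y, g u) 0 y := by
    have potential := ((hg.integral_hasStrictDerivAt a (U y)).hasDerivAt.comp y
      (h.hasDerivAt_fst y)).const_mul 2
    exact (((h.hasDerivAt_snd y).pow 2).add potential).congr_deriv (by ring)
  calc V x ^ 2 + 2 * ∫ u in a..U x, g u
      = V 0 ^ 2 + 2 * ∫ u in a..U 0, g u := is_const_of_deriv_eq_zero
        (fun y ↦ (hasDerivAt_energy y).differentiableAt) (fun y ↦ (hasDerivAt_energy y).deriv) x 0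
    _ = p ^ 2 := by simp [h.fst_zero, h.snd_zero]

theorem Connects.pos (h : Connects g a b c p) : 0 < p := by
  obtain ⟨U, V, h, hUV⟩ := h
  exact h.snd_zero ▸ (hUV 0 le_rfl).2

namespace IsMonostable

theorem overshoots_mono (H : IsMonostable g a b) (hp : 0 < p) (h : Overshoots g a b c p)
    (hc : c' ≤ c) (hpp' : p ≤ p') : Overshoots g a b c' p' := by
  obtain ⟨K, hg⟩ := H.lipschitz
  by_cases hne : c' < c ∨ p < p'
  · exact H.overshoots_of_le hp (h.not_turnsBack hg) hc hpp' hne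
  · push Not at hne
    exact hc.antisymm hne.1 ▸ hpp'.antisymm hne.2 ▸ h

theorem eq_of_connects (H : IsMonostable g a b) (h : Connects g a b c p)
    (h' : Connects g a b c' p') (hc : c' ≤ c) (hpp' : p ≤ p') : c' = c ∧ p = p' := by
  obtain ⟨K, hg⟩ := H.lipschitz
  by_contra hne
  refine h'.not_overshoots hg (H.overshoots_of_le h.pos (h.not_turnsBack hg) hc hpp' ?_)
  by_contra! hge
  exact hne ⟨hc.antisymm hge.1, hpp'.antisymm hge.2⟩

theorem overshoots_of_connects (H : IsMonostable g a b) (h : Connects g a b c p) (hc : c' < c) :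
    Overshoots g a b c' p :=
  let ⟨_, hg⟩ := H.lipschitz
  H.overshoots_of_le h.pos (h.not_turnsBack hg) hc.le le_rfl (.inl hc)

theorem turnsBack_of_connects (H : IsMonostable g a b) (h : Connects g a b c p) (hc : c < c') :
    TurnsBack g a b c' p := by
  obtain ⟨K, hg⟩ := H.lipschitz
  by_contra hnot
  exact h.not_overshoots hg (H.overshoots_of_le h.pos hnot hc.le le_rfl (.inl hc))

theorem exists_overshoots (H : IsMonostable g a b) (hp : 0 < p) : ∃ c, Overshoots g a b c p := by
  obtain ⟨K, hg⟩ := H.lipschitz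
  obtain ⟨M, hM⟩ := isCompact_Icc.bddAbove_image (hg.continuous.continuousOn (s := Icc a b))
  obtain ⟨U, V, h⟩ := H.exists_isShot (-(M + 1) / p) p
  refine ⟨_, H.overshoots_of_forall_le_snd hp h hp fun x hx before_x ↦ ?_⟩
  have U_mono := (h.strictMonoOn_fst fun y hy ↦ (before_x y (Ico_subset_Icc_self hy)).2).monotoneOn
  refine le_of_deriv_pos_of_eq h.continuous_snd.continuousOn (fun y _ ↦ h.hasDerivAt_snd y)
    h.snd_zero.ge (fun y hy hVy ↦ ?_) ⟨hx, le_rfl⟩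
  have hy' := Ico_subset_Icc_self hy
  have gU_le : g (U y) ≤ M := hM <| mem_image_of_mem g
    ⟨h.fst_zero ▸ U_mono ⟨le_rfl, hx⟩ hy' hy.1, (before_x y hy').1.le⟩
  have damping : -(-(M + 1) / p) * p = M + 1 := by field_simp
  rw [hVy, damping]
  linarith

theorem exists_turnsBack (H : IsMonostable g a b) (hp : 0 < p) : ∃ c, TurnsBack g a b c p := by
  refine ⟨2 * p / (b - a), by_contra fun hnot ↦ ?_⟩
  set c := 2 * p / (b - a) with hc
  have width_pos : 0 < b - a := sub_pos.2 H.lt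
  have half_width : c * ((a + b) / 2) = c * a + p := by
    rw [hc]
    field_simp
    ring
  obtain ⟨U, V, h⟩ := H.exists_isShot c p
  obtain ⟨T, hT, hUT, hV⟩ := H.exists_fst_eq_of_not_turnsBack (m := (a + b) / 2) hp h hnot
    ⟨by linarith, by linarith⟩
  have U_mono := (h.strictMonoOn_fst fun y hy ↦ hV y (Ico_subset_Icc_self hy))
  have hasDerivAt_momentum (x : ℝ) : HasDerivAt (fun x ↦ V x + c * U x) (-g (U x)) x :=
    ((h.hasDerivAt_snd x).add ((h.hasDerivAt_fst x).const_mul c)).congr_deriv (by ring)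
  have momentum_anti : AntitoneOn (fun x ↦ V x + c * U x) (Icc 0 T) := by
    refine antitoneOn_of_deriv_nonpos (convex_Icc 0 T)
      (fun x _ ↦ (hasDerivAt_momentum x).continuousAt.continuousWithinAt)
      (fun x _ ↦ (hasDerivAt_momentum x).differentiableAt.differentiableWithinAt) fun x hx ↦ ?_
    rw [interior_Icc] at hx
    rw [(hasDerivAt_momentum x).deriv]
    have a_lt := h.fst_zero ▸ U_mono ⟨le_rfl, hT⟩ (Ioo_subset_Icc_self hx) hx.1
    have lt_b := U_mono (Ioo_subset_Icc_self hx) ⟨hT, le_rfl⟩ hx.2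
    exact neg_nonpos.2 (H.pos _ ⟨a_lt, by linarith⟩).le
  have VT_le : V T + c * ((a + b) / 2) ≤ p + c * a := by
    simpa only [hUT, h.fst_zero, h.snd_zero] using
      momentum_anti ⟨le_rfl, hT⟩ ⟨hT, le_rfl⟩ hT
  linarith [hV T ⟨hT, le_rfl⟩]

theorem exists_connects (H : IsMonostable g a b) (hp : 0 < p) : ∃ c, Connects g a b c p := by
  obtain ⟨K, hg⟩ := H.lipschitz
  have slice_continuous : Continuous fun c : ℝ ↦ (c, p) := by fun_prop
  by_contra! hnot
  obtain ⟨c, -, hover, hturn⟩ := isPreconnected_univ _ _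
    (H.isOpen_overshoots.preimage slice_continuous) (H.isOpen_turnsBack.preimage slice_continuous)
    (fun c _ ↦ (H.overshoots_or_turnsBack_or_connects c hp).imp_right
      fun h ↦ h.resolve_right (hnot c))
    ((H.exists_overshoots hp).imp fun c hc ↦ ⟨mem_univ c, hc⟩)
    ((H.exists_turnsBack hp).imp fun c hc ↦ ⟨mem_univ c, hc⟩)
  exact hover.not_turnsBack hg hturn

theorem integral_pos (H : IsMonostable g a b) : 0 < ∫ u in a..b, g u :=
  let ⟨_, hg⟩ := H.lipschitz
  intervalIntegral.intervalIntegral_pos_of_pos_on (hg.continuous.intervalIntegrable a b) H.pos H.lt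

theorem overshoots_of_integral_lt (H : IsMonostable g a b) (hp : 0 < p)
    (hlt : 2 * ∫ u in a..b, g u < p ^ 2) : Overshoots g a b 0 p := by
  obtain ⟨K, hg⟩ := H.lipschitz
  obtain ⟨U, V, h⟩ := H.exists_isShot 0 p
  refine H.overshoots_of_forall_le_snd hp h (Real.sqrt_pos.2 (sub_pos.2 hlt)) fun x hx before_x ↦ ?_
  have Ux_lt := (before_x x ⟨hx, le_rfl⟩).1
  have a_le : a ≤ U x := h.fst_zero ▸ (h.strictMonoOn_fst fun y hy ↦
    (before_x y (Ico_subset_Icc_self hy)).2).monotoneOn ⟨le_rfl, hx⟩ ⟨hx, le_rfl⟩ hx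
  have integral_Ux_b_pos : 0 < ∫ u in U x..b, g u :=
    intervalIntegral.intervalIntegral_pos_of_pos_on (hg.continuous.intervalIntegrable _ _)
      (fun u hu ↦ H.pos u ⟨a_le.trans_lt hu.1, hu.2⟩) Ux_lt
  have integral_add := intervalIntegral.integral_add_adjacent_intervals (μ := MeasureTheory.volume)
    (hg.continuous.intervalIntegrable a (U x)) (hg.continuous.intervalIntegrable (U x) b)
  refine Real.sqrt_le_iff.2 ⟨(before_x x ⟨hx, le_rfl⟩).2.le, ?_⟩
  linarith [h.energy_eq hg.continuous x]

theorem turnsBack_of_lt_integral (H : IsMonostable g a b) (hp : 0 < p)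
    (hlt : p ^ 2 < 2 * ∫ u in a..b, g u) : TurnsBack g a b 0 p := by
  obtain ⟨K, hg⟩ := H.lipschitz
  obtain ⟨U, V, h⟩ := H.exists_isShot 0 p
  by_contra hnot
  have integral_le (m : ℝ) (hm : m ∈ Ico a b) : 2 * ∫ u in a..m, g u ≤ p ^ 2 := by
    obtain ⟨T, -, rfl, -⟩ := H.exists_fst_eq_of_not_turnsBack hp h hnot hm
    linarith [h.energy_eq hg.continuous T, sq_nonneg (V T)]
  have b_mem_closure : b ∈ closure (Ico a b) := closure_Ico H.lt.ne ▸ ⟨H.lt.le, le_rfl⟩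
  have isClosed_le_sq : IsClosed {m : ℝ | 2 * ∫ u in a..m, g u ≤ p ^ 2} :=
    isClosed_le ((intervalIntegral.continuous_primitive hg.continuous.intervalIntegrable
      a).const_mul 2) continuous_const
  exact hlt.not_ge (closure_minimal integral_le isClosed_le_sq b_mem_closure)

/-! ### Matching the two half-orbits -/

variable {g₁ g₂ : ℝ → ℝ} {a₁ b₁ a₂ b₂ : ℝ}

theorem eq_of_connects_pair (H₁ : IsMonostable g₁ a₁ b₁) (H₂ : IsMonostable g₂ a₂ b₂)
    (h₁ : Connects g₁ a₁ b₁ c p) (h₂ : Connects g₂ a₂ b₂ (-c) p)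
    (h₁' : Connects g₁ a₁ b₁ c' p') (h₂' : Connects g₂ a₂ b₂ (-c') p') : c = c' ∧ p = p' := by
  wlog hpp' : p ≤ p' generalizing c p c' p'
  · exact (this h₁' h₂' h₁ h₂ (le_of_not_ge hpp')).imp Eq.symm Eq.symm
  rcases le_total c' c with hc | hc
  · exact (H₁.eq_of_connects h₁ h₁' hc hpp').imp_left Eq.symm
  · exact (H₂.eq_of_connects h₂ h₂' (neg_le_neg hc) hpp').imp_left fun h ↦ (neg_injective h).symm

theorem not_turnsBack_pair_of_overshoots_pair (H₁ : IsMonostable g₁ a₁ b₁)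
    (H₂ : IsMonostable g₂ a₂ b₂) (hp : 0 < p) (h₁ : Overshoots g₁ a₁ b₁ c p)
    (h₂ : Overshoots g₂ a₂ b₂ (-c) p) :
    ¬ (TurnsBack g₁ a₁ b₁ c' p ∧ TurnsBack g₂ a₂ b₂ (-c') p) := by
  obtain ⟨K₁, hg₁⟩ := H₁.lipschitz
  obtain ⟨K₂, hg₂⟩ := H₂.lipschitz
  rintro ⟨h₁', h₂'⟩
  rcases le_total c' c with hc | hc
  · exact (H₁.overshoots_mono hp h₁ hc le_rfl).not_turnsBack hg₁ h₁'
  · exact (H₂.overshoots_mono hp h₂ (neg_le_neg hc) le_rfl).not_turnsBack hg₂ h₂'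

theorem overshoots_or_turnsBack_or_connects_pair (H₁ : IsMonostable g₁ a₁ b₁)
    (H₂ : IsMonostable g₂ a₂ b₂) (hp : 0 < p) : ∃ c,
      (Overshoots g₁ a₁ b₁ c p ∧ Overshoots g₂ a₂ b₂ (-c) p) ∨
      (TurnsBack g₁ a₁ b₁ c p ∧ TurnsBack g₂ a₂ b₂ (-c) p) ∨
      (Connects g₁ a₁ b₁ c p ∧ Connects g₂ a₂ b₂ (-c) p) := by
  obtain ⟨c, h₁⟩ := H₁.exists_connects hp
  have slice_continuous : Continuous fun c : ℝ ↦ (-c, p) := by fun_prop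
  rcases H₂.overshoots_or_turnsBack_or_connects (-c) hp with h₂ | h₂ | h₂
  · have near : ∀ᶠ c' in 𝓝[<] c, Overshoots g₂ a₂ b₂ (-c') p := nhdsWithin_le_nhds
      ((H₂.isOpen_overshoots.preimage slice_continuous).mem_nhds h₂)
    obtain ⟨c', h₂', hc⟩ := (near.and self_mem_nhdsWithin).exists
    exact ⟨c', .inl ⟨H₁.overshoots_of_connects h₁ hc, h₂'⟩⟩
  · have near : ∀ᶠ c' in 𝓝[>] c, TurnsBack g₂ a₂ b₂ (-c') p := nhdsWithin_le_nhds
      ((H₂.isOpen_turnsBack.preimage slice_continuous).mem_nhds h₂)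
    obtain ⟨c', h₂', hc⟩ := (near.and self_mem_nhdsWithin).exists
    exact ⟨c', .inr (.inl ⟨H₁.turnsBack_of_connects h₁ hc, h₂'⟩)⟩
  · exact ⟨c, .inr (.inr ⟨h₁, h₂⟩)⟩

theorem exists_overshoots_pair (H₁ : IsMonostable g₁ a₁ b₁) (H₂ : IsMonostable g₂ a₂ b₂) :
    ∃ p > 0, Overshoots g₁ a₁ b₁ 0 p ∧ Overshoots g₂ a₂ b₂ 0 p := by
  obtain ⟨p, hp, hp₁, hp₂⟩ := ((eventually_gt_atTop 0).and
    (((tendsto_pow_atTop two_ne_zero).eventually_gt_atTop (2 * ∫ u in a₁..b₁, g₁ u)).and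
      ((tendsto_pow_atTop two_ne_zero).eventually_gt_atTop (2 * ∫ u in a₂..b₂, g₂ u)))).exists
  exact ⟨p, hp, H₁.overshoots_of_integral_lt hp hp₁, H₂.overshoots_of_integral_lt hp hp₂⟩

theorem exists_turnsBack_pair (H₁ : IsMonostable g₁ a₁ b₁) (H₂ : IsMonostable g₂ a₂ b₂) :
    ∃ p > 0, TurnsBack g₁ a₁ b₁ 0 p ∧ TurnsBack g₂ a₂ b₂ 0 p := by
  have sq_small {I : ℝ} (hI : 0 < I) : ∀ᶠ p : ℝ in 𝓝[>] 0, p ^ 2 < 2 * I :=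
    nhdsWithin_le_nhds ((continuous_pow 2).continuousAt.eventually_lt_const (by simpa using hI))
  obtain ⟨p, hp, hp₁, hp₂⟩ := (eventually_mem_nhdsWithin.and
    ((sq_small H₁.integral_pos).and (sq_small H₂.integral_pos))).exists
  exact ⟨p, hp, H₁.turnsBack_of_lt_integral hp hp₁, H₂.turnsBack_of_lt_integral hp hp₂⟩

theorem exists_connects_pair (H₁ : IsMonostable g₁ a₁ b₁) (H₂ : IsMonostable g₂ a₂ b₂) :
    ∃ c p, Connects g₁ a₁ b₁ c p ∧ Connects g₂ a₂ b₂ (-c) p := by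
  let A : Set (ℝ × ℝ) := {q | Overshoots g₁ a₁ b₁ q.1 q.2 ∧ Overshoots g₂ a₂ b₂ (-q.1) q.2}
  let B : Set (ℝ × ℝ) := {q | TurnsBack g₁ a₁ b₁ q.1 q.2 ∧ TurnsBack g₂ a₂ b₂ (-q.1) q.2}
  have reflect_continuous : Continuous fun q : ℝ × ℝ ↦ (-q.1, q.2) := by fun_prop
  have A_open : IsOpen A :=
    H₁.isOpen_overshoots.inter (H₂.isOpen_overshoots.preimage reflect_continuous)
  have B_open : IsOpen B :=
    H₁.isOpen_turnsBack.inter (H₂.isOpen_turnsBack.preimage reflect_continuous)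
  by_contra! hnot
  obtain ⟨p, hp, ⟨⟨c, _⟩, ⟨h₁, h₂⟩, rfl⟩, ⟨⟨c', _⟩, hturn, rfl⟩⟩ := isPreconnected_Ioi
    (Prod.snd '' A) (Prod.snd '' B) (isOpenMap_snd _ A_open) (isOpenMap_snd _ B_open)
    (fun p hp ↦ by
      obtain ⟨c, h | h | h⟩ := H₁.overshoots_or_turnsBack_or_connects_pair H₂ hp
      · exact .inl ⟨(c, p), h, rfl⟩
      · exact .inr ⟨(c, p), h, rfl⟩
      · exact absurd h.2 (hnot c p h.1))
    (by
      obtain ⟨p, hp, h⟩ := H₁.exists_overshoots_pair H₂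
      exact ⟨p, hp, (0, p), by simpa [A] using h, rfl⟩)
    (by
      obtain ⟨p, hp, h⟩ := H₁.exists_turnsBack_pair H₂
      exact ⟨p, hp, (0, p), by simpa [B] using h, rfl⟩)
  exact H₁.not_turnsBack_pair_of_overshoots_pair H₂ hp h₁ h₂ hturn

end IsMonostable

end Shooting

/-! ### Fronts -/

section Fronts

/-- A traveling front of speed `c` from `l` to `r` in the phase plane: a solution with values in
`[l, r]` joining the rest states `l` and `r`. -/
structure IsFront (g : ℝ → ℝ) (l r c : ℝ) (U V : ℝ → ℝ) : Prop extends
    IsPhaseSolution g c U V where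
  mem_Icc (x : ℝ) : U x ∈ Icc l r
  tendsto_atBot : Tendsto U atBot (𝓝 l)
  tendsto_atTop : Tendsto U atTop (𝓝 r)

variable {g : ℝ → ℝ} {K : ℝ≥0} {l a r c p c' : ℝ} {U V U' V' : ℝ → ℝ}

theorem IsPhaseSolution.isShot_comp_add_const (h : IsPhaseSolution g c U V) (X : ℝ) :
    IsShot g (U X) c (V X) (fun x ↦ U (x + X)) (fun x ↦ V (x + X)) where
  toIsPhaseSolution := h.comp_add_const X
  fst_zero := congrArg U (zero_add X)
  snd_zero := congrArg V (zero_add X)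

namespace IsFront

theorem reflect (h : IsFront g l r c U V) :
    IsFront (fun u ↦ -g (-u)) (-r) (-l) (-c) (fun x ↦ -U (-x)) (fun x ↦ V (-x)) where
  toIsPhaseSolution := h.toIsPhaseSolution.reflect
  mem_Icc x := ⟨neg_le_neg (h.mem_Icc (-x)).2, neg_le_neg (h.mem_Icc (-x)).1⟩
  tendsto_atBot := (h.tendsto_atTop.comp tendsto_neg_atBot_atTop).neg
  tendsto_atTop := (h.tendsto_atBot.comp tendsto_neg_atTop_atBot).neg

theorem fst_lt (hg : LipschitzWith K g) (h : IsFront g l r c U V) (hr : g r = 0) (hlr : l < r)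
    (x : ℝ) : U x < r := by
  refine (h.mem_Icc x).2.lt_of_ne fun hUx ↦ ?_
  have isMax : IsLocalMax U x := .of_forall fun y ↦ hUx ▸ (h.mem_Icc y).2
  have U_const := (h.eq_of_eq_at hg (.const hr c) hUx
    (isMax.hasDerivAt_eq_zero (h.hasDerivAt_fst x))).1
  exact hlr.ne (tendsto_nhds_unique h.tendsto_atBot (U_const ▸ tendsto_const_nhds))

/-- If the velocity vanished it would stay nonpositive, as `V' = -g(U) < 0` on `V = 0`, so `U` could
not increase to `r`. -/
theorem snd_pos (H : IsMonostable g a r) (h : IsFront g l r c U V) (hlr : l < r) {T : ℝ}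
    (hT : ∀ x ≥ T, a < U x) : 0 < V T := by
  obtain ⟨K, hg⟩ := H.lipschitz
  by_contra! hVT
  have U_lt (x : ℝ) : U x < r := h.fst_lt hg H.map_right hlr x
  have V_nonpos (x : ℝ) (hx : x ≥ T) : V x ≤ 0 := by
    refine neg_nonneg.1 <| le_of_deriv_pos_of_eq (φ := fun y ↦ -V y)
      h.continuous_snd.neg.continuousOn (fun y _ ↦ (h.hasDerivAt_snd y).neg)
      (neg_nonneg.2 hVT) (fun y hy hVy ↦ ?_) (right_mem_Icc.2 hx)
    simpa [neg_eq_zero.1 hVy] using H.pos (U y) ⟨hT y hy.1, U_lt y⟩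
  have U_antitone : AntitoneOn U (Ici T) := antitoneOn_of_deriv_nonpos (convex_Ici T)
    h.continuous_fst.continuousOn
    (fun x _ ↦ (h.hasDerivAt_fst x).differentiableAt.differentiableWithinAt)
    fun x hx ↦ (h.hasDerivAt_fst x).deriv ▸ V_nonpos x (interior_subset hx)
  refine (U_lt T).not_ge (le_of_tendsto h.tendsto_atTop ?_)
  exact (eventually_ge_atTop T).mono fun x hx ↦ U_antitone self_mem_Ici hx hx

theorem exists_last_crossing (H : IsMonostable g a r) (h : IsFront g l r c U V) (hla : l < a) :
    ∃ X, U X = a ∧ ∀ x ≥ X, 0 < V x := by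
  obtain ⟨K, hg⟩ := H.lipschitz
  obtain ⟨x₀, hx₀⟩ := (h.tendsto_atBot.eventually_lt_const hla).exists
  obtain ⟨X, hUX, after_X⟩ := exists_last_eq h.continuous_fst hx₀.le
    (h.tendsto_atTop.eventually_const_lt H.lt)
  have V_pos (x : ℝ) (hx : x > X) : 0 < V x :=
    h.snd_pos H (hla.trans H.lt) fun y hy ↦ after_X y (hx.trans_le hy)
  have VX_nonneg : 0 ≤ V X := ge_of_tendsto
    (h.continuous_snd.continuousWithinAt (s := Ioi X) (x := X))
    (eventually_mem_nhdsWithin.mono fun x hx ↦ (V_pos x hx).le)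
  have VX_ne : V X ≠ 0 := fun hVX ↦
    hx₀.ne (congrFun (h.eq_of_eq_at hg (.const H.map_left c) hUX hVX).1 x₀)
  refine ⟨X, hUX, fun x hx ↦ hx.eq_or_lt.elim (fun hXx ↦ hXx ▸ ?_) (V_pos x)⟩
  exact VX_nonneg.lt_of_ne VX_ne.symm

theorem connects (H : IsMonostable g a r) (h : IsFront g l r c U V) (hla : l < a) {X : ℝ}
    (hUX : U X = a) (hV : ∀ x ≥ X, 0 < V x) : Connects g a r c (V X) :=
  let ⟨_, hg⟩ := H.lipschitz
  ⟨_, _, hUX ▸ h.isShot_comp_add_const X, fun _ hx ↦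
    ⟨h.fst_lt hg H.map_right (hla.trans H.lt) _, hV _ (le_add_of_nonneg_left hx)⟩⟩

theorem snd_le_of_connects (H : IsMonostable g a r) (h : IsFront g l r c U V) (hla : l < a)
    (hp : Connects g a r c p) {X : ℝ} (hUX : U X = a) : V X ≤ p := by
  obtain ⟨K, hg⟩ := H.lipschitz
  by_contra! hlt
  obtain ⟨U', V', h', T, -, hUT, -⟩ :=
    H.overshoots_of_le hp.pos (hp.not_turnsBack hg) le_rfl hlt.le (.inr hlt)
  obtain ⟨rfl, -⟩ := h'.unique hg (hUX ▸ h.isShot_comp_add_const X)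
  exact (h.fst_lt hg H.map_right (hla.trans H.lt) _).ne hUT

/-- The first and the last crossing of `a` have the same velocity by comparison on both sides,
hence lie on the same orbit up to translation. -/
theorem exists_crossing (H₁ : IsMonostable g a r)
    (H₂ : IsMonostable (fun u ↦ -g (-u)) (-a) (-l)) (h : IsFront g l r c U V) :
    ∃ X, U X = a ∧ Connects g a r c (V X) ∧ Connects (fun u ↦ -g (-u)) (-a) (-l) (-c) (V X) ∧
      ∀ x, 0 < V x := by
  obtain ⟨K, hg⟩ := H₁.lipschitz
  have hla : l < a := neg_lt_neg_iff.1 H₂.lt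
  obtain ⟨X, hUX, after_X⟩ := h.exists_last_crossing H₁ hla
  obtain ⟨Y, hUY, before_Y⟩ := h.reflect.exists_last_crossing H₂ (neg_lt_neg H₁.lt)
  have connects_X := h.connects H₁ hla hUX after_X
  have connects_Y := h.reflect.connects H₂ (neg_lt_neg H₁.lt) hUY before_Y
  have V_le : V (-Y) ≤ V X := h.snd_le_of_connects H₁ hla connects_X (neg_injective hUY)
  have V_ge : V (- -X) ≤ V (-Y) := h.reflect.snd_le_of_connects H₂ (neg_lt_neg H₁.lt) connects_Y
    (by simpa using hUX)
  have V_eq : V (-Y) = V X := V_le.antisymm (neg_neg X ▸ V_ge)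
  obtain ⟨-, V_translate⟩ := (h.comp_add_const (-Y)).eq_of_eq_at hg (h.comp_add_const X) (x₀ := 0)
    (by simpa [hUX] using hUY) (by simpa using V_eq)
  refine ⟨X, hUX, connects_X, V_eq ▸ connects_Y, fun x ↦ ?_⟩
  rcases le_total (-Y) x with hx | hx
  · have := congrFun V_translate (x + Y)
    rw [add_neg_cancel_right] at this
    exact this ▸ after_X _ (by linarith)
  · simpa using before_Y (-x) (le_neg.1 hx)

theorem strictMono_fst (H₁ : IsMonostable g a r)
    (H₂ : IsMonostable (fun u ↦ -g (-u)) (-a) (-l)) (h : IsFront g l r c U V) : StrictMono U := by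
  obtain ⟨-, -, -, -, V_pos⟩ := h.exists_crossing H₁ H₂
  exact strictMono_of_deriv_pos fun x ↦ (h.hasDerivAt_fst x).deriv ▸ V_pos x

theorem speed_eq (H₁ : IsMonostable g a r) (H₂ : IsMonostable (fun u ↦ -g (-u)) (-a) (-l))
    (h : IsFront g l r c U V) (h' : IsFront g l r c' U' V') : c = c' := by
  obtain ⟨X, -, right_X, left_X, -⟩ := h.exists_crossing H₁ H₂
  obtain ⟨X', -, right_X', left_X', -⟩ := h'.exists_crossing H₁ H₂
  exact (H₁.eq_of_connects_pair H₂ right_X left_X right_X' left_X').1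

theorem exists_eq_comp_add_const (H₁ : IsMonostable g a r)
    (H₂ : IsMonostable (fun u ↦ -g (-u)) (-a) (-l)) (h : IsFront g l r c U V)
    (h' : IsFront g l r c U' V') : ∃ τ, U' = fun x ↦ U (x + τ) := by
  obtain ⟨K, hg⟩ := H₁.lipschitz
  obtain ⟨X, hUX, right_X, left_X, -⟩ := h.exists_crossing H₁ H₂
  obtain ⟨X', hUX', right_X', left_X', -⟩ := h'.exists_crossing H₁ H₂
  have V_eq := (H₁.eq_of_connects_pair H₂ right_X left_X right_X' left_X').2
  exact ⟨X - X', (h'.eq_of_eq_at hg (h.comp_add_const (X - X')) (x₀ := X')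
    (by simp [hUX, hUX']) (by simp [V_eq])).1⟩

theorem exists_of_connects (H₁ : IsMonostable g a r)
    (H₂ : IsMonostable (fun u ↦ -g (-u)) (-a) (-l)) (h₁ : Connects g a r c p)
    (h₂ : Connects (fun u ↦ -g (-u)) (-a) (-l) (-c) p) : ∃ U V, IsFront g l r c U V := by
  obtain ⟨K, hg⟩ := H₂.lipschitz
  obtain ⟨U, V, h, hUV⟩ := h₁
  obtain ⟨U', V', h', hUV'⟩ := h₂
  have h_reflect : IsShot (fun u ↦ -g (-u)) (-a) (-c) p (fun x ↦ -U (-x)) (fun x ↦ V (-x)) :=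
    ⟨h.toIsPhaseSolution.reflect, by simp [h.fst_zero], by simp [h.snd_zero]⟩
  obtain ⟨rfl, rfl⟩ := h'.unique hg h_reflect
  have U_mono : StrictMono U := strictMono_of_deriv_pos fun x ↦ by
    rw [(h.hasDerivAt_fst x).deriv]
    rcases le_total 0 x with hx | hx
    · exact (hUV x hx).2
    · simpa using (hUV' (-x) (neg_nonneg.2 hx)).2
  have tendsto_right : Tendsto U atTop (𝓝 r) := H₁.tendsto_fst h hUV
  have tendsto_left : Tendsto U atBot (𝓝 l) := by
    simpa [Function.comp_def] using
      ((H₂.tendsto_fst h' hUV').comp tendsto_neg_atBot_atTop).neg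
  exact ⟨U, V, h.toIsPhaseSolution, fun x ↦ ⟨U_mono.monotone.le_of_tendsto tendsto_left x,
    U_mono.monotone.ge_of_tendsto tendsto_right x⟩, tendsto_left, tendsto_right⟩

end IsFront

end Fronts

/-! ### Bistable reactions -/

/-- A bistable reaction on `[l, r]`: it vanishes at `l`, `a` and `r`, is negative on `(l, a)` and
positive on `(a, r)`. Lipschitz continuity on `[l, r]` replaces the smoothness of the paper. -/
structure IsBistable (f : ℝ → ℝ) (l a r : ℝ) : Prop where
  left_lt : l < a
  lt_right : a < r
  lipschitzOn : ∃ K, LipschitzOnWith K f (Icc l r)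
  map_left : f l = 0
  map_mid : f a = 0
  map_right : f r = 0
  neg : ∀ u ∈ Ioo l a, f u < 0
  pos : ∀ u ∈ Ioo a r, 0 < f u

section Bistable

variable {f g : ℝ → ℝ} {l a r c : ℝ} {U V : ℝ → ℝ}

theorem IsBistable.exists_isMonostable (H : IsBistable f l a r) :
    ∃ g, EqOn f g (Icc l r) ∧ IsMonostable g a r ∧
      IsMonostable (fun u ↦ -g (-u)) (-a) (-l) := by
  obtain ⟨K, hf⟩ := H.lipschitzOn
  obtain ⟨g, hg, hfg⟩ := hf.extend_real
  have hla := H.left_lt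
  have har := H.lt_right
  refine ⟨g, hfg, ⟨har, ⟨K, hg⟩, ?_, ?_, fun u hu ↦ ?_⟩,
    ⟨neg_lt_neg hla, ⟨_, (hg.comp LipschitzWith.id.neg).neg⟩, ?_, ?_, fun u hu ↦ ?_⟩⟩
  · rw [← hfg ⟨hla.le, har.le⟩, H.map_mid]
  · rw [← hfg ⟨(hla.trans har).le, le_rfl⟩, H.map_right]
  · rw [← hfg ⟨(hla.trans hu.1).le, hu.2.le⟩]
    exact H.pos u hu
  · rw [neg_neg, ← hfg ⟨hla.le, har.le⟩, H.map_mid, neg_zero]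
  · rw [neg_neg, ← hfg ⟨le_rfl, (hla.trans har).le⟩, H.map_left, neg_zero]
  · have neg_mem : -u ∈ Ioo l a := ⟨lt_neg.1 hu.2, neg_lt.1 hu.1⟩
    rw [← hfg ⟨neg_mem.1.le, (neg_mem.2.trans har).le⟩]
    exact neg_pos.2 (H.neg _ neg_mem)

theorem neg_of_deriv_neg_of_forall_ne_zero (hf : Continuous f) (hl : f l = 0)
    (hl' : deriv f l < 0) (hne : ∀ u ∈ Ioo l a, f u ≠ 0) : ∀ u ∈ Ioo l a, f u < 0 := by
  intro u hu
  by_contra! hfu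
  obtain ⟨y, hfy, hy⟩ :=
    ((eventually_nhdsGT_neg_of_deriv_neg hl hl').and (Ioo_mem_nhdsGT hu.1)).exists
  obtain ⟨z, hz, hfz⟩ := intermediate_value_Icc hy.2.le hf.continuousOn ⟨hfy.le, hfu⟩
  exact hne z ⟨hy.1.trans_le hz.1, hz.2.trans_lt hu.2⟩ hfz

theorem isBistable_of_contDiff (hf : ContDiff ℝ 1 f) (hl : f l = 0) (hr : f r = 0)
    (hl' : deriv f l < 0) (hr' : deriv f r < 0) (ha : a ∈ Ioo l r)
    (hzero : ∀ u ∈ Ioo l r, f u = 0 ↔ u = a) : IsBistable f l a r where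
  left_lt := ha.1
  lt_right := ha.2
  lipschitzOn := hf.contDiffOn.exists_lipschitzOnWith one_ne_zero (convex_Icc l r) isCompact_Icc
  map_left := hl
  map_mid := (hzero a ha).2 rfl
  map_right := hr
  neg := neg_of_deriv_neg_of_forall_ne_zero hf.continuous hl hl' fun u hu hfu ↦
    hu.2.ne ((hzero u ⟨hu.1, hu.2.trans ha.2⟩).1 hfu)
  pos u hu := by
    have reflected := neg_of_deriv_neg_of_forall_ne_zero (f := fun u ↦ -f (-u)) (l := -r)
      (a := -a) (by fun_prop) (by simp [hr]) (by simpa [deriv_comp_neg] using hr')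
      (fun v hv hfv ↦ by
        have neg_mem : -v ∈ Ioo a r := ⟨lt_neg.1 hv.2, neg_lt.1 hv.1⟩
        exact neg_mem.1.ne' ((hzero _ ⟨ha.1.trans neg_mem.1, neg_mem.2⟩).1 (neg_eq_zero.1 hfv)))
      (-u) ⟨neg_lt_neg hu.2, neg_lt_neg hu.1⟩
    simpa using reflected

theorem IsTravelingProfile.isFront (hfg : EqOn f g (Icc 0 1)) (h : IsTravelingProfile f c U) :
    IsFront g 0 1 c U (deriv U) := by
  obtain ⟨U_contDiff, U_mem, ode, tendsto_bot, tendsto_top⟩ := h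
  refine ⟨⟨fun x ↦ (U_contDiff.differentiable two_ne_zero x).hasDerivAt, fun x ↦ ?_⟩, U_mem,
    tendsto_bot, tendsto_top⟩
  refine (U_contDiff.differentiable_deriv_two x).hasDerivAt.congr_deriv ?_
  rw [← hfg (U_mem x)]
  linarith [ode x]

theorem IsFront.isTravelingProfile (hg : Continuous g) (hfg : EqOn f g (Icc 0 1))
    (h : IsFront g 0 1 c U V) : IsTravelingProfile f c U := by
  have deriv_U : deriv U = V := funext fun x ↦ (h.hasDerivAt_fst x).deriv
  have deriv_V : deriv V = fun x ↦ -c * V x - g (U x) := funext fun x ↦ (h.hasDerivAt_snd x).deriv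
  refine ⟨?_, h.mem_Icc, fun x ↦ ?_, h.tendsto_atBot, h.tendsto_atTop⟩
  · have V_contDiff : ContDiff ℝ 1 V := contDiff_one_iff_deriv.2
      ⟨fun x ↦ (h.hasDerivAt_snd x).differentiableAt, deriv_V ▸
        (h.continuous_snd.const_mul (-c)).sub (hg.comp h.continuous_fst)⟩
    exact contDiff_succ_iff_deriv (n := 1).2
      ⟨fun x ↦ (h.hasDerivAt_fst x).differentiableAt, by simp, deriv_U.symm ▸ V_contDiff⟩
  · rw [deriv_U, deriv_V, hfg (h.mem_Icc x)]
    ring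

end Bistable

theorem bistable_unique_speed_traveling_profile_general {f : ℝ → ℝ} {a : ℝ}
    (H : IsBistable f 0 a 1) :
    ∃ cstar : ℝ,
      (∃ U, IsTravelingProfile f cstar U) ∧
      (∀ U, IsTravelingProfile f cstar U → StrictMono U) ∧
      (∀ U V, IsTravelingProfile f cstar U → IsTravelingProfile f cstar V →
        ∃ τ : ℝ, ∀ x, V x = U (x + τ)) ∧
      (∀ c, c ≠ cstar → ¬ ∃ U, IsTravelingProfile f c U) := by
  obtain ⟨g, hfg, H₁, H₂⟩ := H.exists_isMonostable
  obtain ⟨K, hg⟩ := H₁.lipschitz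
  obtain ⟨c, p, h₁, h₂⟩ := H₁.exists_connects_pair H₂
  obtain ⟨U₀, V₀, front⟩ := IsFront.exists_of_connects H₁ H₂ h₁ h₂
  refine ⟨c, ⟨U₀, front.isTravelingProfile hg.continuous hfg⟩,
    fun U hU ↦ (hU.isFront hfg).strictMono_fst H₁ H₂, fun U V hU hV ↦ ?_, ?_⟩
  · exact ((hU.isFront hfg).exists_eq_comp_add_const H₁ H₂ (hV.isFront hfg)).imp
      fun τ ↦ congrFun
  · rintro c' hc ⟨U, hU⟩
    exact hc ((hU.isFront hfg).speed_eq H₁ H₂ front)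

/-- In the bistable case (A2) there is a unique speed `c*` admitting a
traveling profile; the profile is monotone increasing, unique up to translation,
and no other speed admits a profile. -/
theorem bistable_unique_speed_traveling_profile
    (f : ℝ → ℝ) (hf : ContDiff ℝ 2 f)
    (hf0 : f 0 = 0) (hf1 : f 1 = 0)
    (hf'0 : deriv f 0 < 0) (hf'1 : deriv f 1 < 0)
    (ustar : ℝ) (hustar : ustar ∈ Ioo (0:ℝ) 1)
    (hfz : ∀ u ∈ Ioo (0:ℝ) 1, f u = 0 ↔ u = ustar)
    (hf'u : 0 < deriv f ustar) :
    ∃ cstar : ℝ,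
      (∃ U, IsTravelingProfile f cstar U) ∧
      (∀ U, IsTravelingProfile f cstar U → StrictMono U) ∧
      (∀ U V, IsTravelingProfile f cstar U → IsTravelingProfile f cstar V →
        ∃ τ : ℝ, ∀ x, V x = U (x + τ)) ∧
      (∀ c, c ≠ cstar → ¬ ∃ U, IsTravelingProfile f c U) := by
  exact bistable_unique_speed_traveling_profile_general <|
    isBistable_of_contDiff (hf.of_le one_le_two) hf0 hf1 hf'0 hf'1 hustar hfz
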